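/- arXiv:2401.08385 — 5 statements merged into one kernel-verified Lean document; each statement's English description precedes it below -/
import Mathlib

section
/- (Mutual recursion for procedure contracts, Coq lemma recursive_proc.) Let ψ be a procedure environment and φ a contract environment. If for every procedure environment ψ', ψ' ⊨ φ implies that for every procedure name y the Hoare triple ψ' ⊨ {pre_φ(y)} ψ(y) {post_φ(y)} holds (i.e., the body of y taken from ψ satisfies its contract when executed under ψ'), then ψ ⊨ φ. -/
/-- Memory states: location `x_i` holds value `σ i`. -/
abbrev Mem : Type := ℕ → ℕ

/-- Update `σ[i/n]`: maps `i` to `n` and agrees with `σ` elsewhere. -/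
def Mem.update (σ : Mem) (i n : ℕ) : Mem := fun j => if j = i then n else σ j

inductive Aop : Type
  | add | mul | sub

def Aop.eval : Aop → ℕ → ℕ → ℕ
  | .add => fun m n => m + n
  | .mul => fun m n => m * n
  | .sub => fun m n => m - n

/-- Arithmetic expressions. -/
inductive Aexp : Type
  | const : ℕ → Aexp
  | loc : ℕ → Aexp
  | deref : ℕ → Aexp
  | addr : ℕ → Aexp
  | binop : Aop → Aexp → Aexp → Aexp

def Aexp.eval : Aexp → Mem → ℕ
  | .const n, _ => n
  | .loc i, σ => σ i
  | .deref i, σ => σ (σ i)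
  | .addr i, _ => i
  | .binop o a1 a2, σ => o.eval (a1.eval σ) (a2.eval σ)

inductive Bcmp : Type
  | le | lt | eq

def Bcmp.eval : Bcmp → ℕ → ℕ → Bool
  | .le => fun m n => decide (m ≤ n)
  | .lt => fun m n => decide (m < n)
  | .eq => fun m n => decide (m = n)

/-- Boolean expressions. -/
inductive Bexp : Type
  | tt : Bexp
  | ff : Bexp
  | cmp : Bcmp → Aexp → Aexp → Bexp
  | and : Bexp → Bexp → Bexp
  | or : Bexp → Bexp → Bexp
  | not : Bexp → Bexp

def Bexp.eval : Bexp → Mem → Bool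
  | .tt, _ => true
  | .ff, _ => false
  | .cmp o a1 a2, σ => o.eval (a1.eval σ) (a2.eval σ)
  | .and b1 b2, σ => b1.eval σ && b2.eval σ
  | .or b1 b2, σ => b1.eval σ || b2.eval σ
  | .not b, σ => !(b.eval σ)

/-- Commands, over a type `Y` of procedure names. -/
inductive Com (Y : Type) : Type
  | skip : Com Y
  | assign : ℕ → Aexp → Com Y                      -- x_i := a
  | store : ℕ → Aexp → Com Y                       -- *x_i := a
  | seq : Com Y → Com Y → Com Y
  | assert : (Mem → Prop) → Com Y
  | cond : Bexp → Com Y → Com Y → Com Y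
  | while : Bexp → (Mem → Prop) → Com Y → Com Y
  | call : Y → Com Y

/-- Big-step operational semantics `⟨c, σ⟩ →_ψ σ'`. -/
inductive BigStep {Y : Type} (ψ : Y → Com Y) : Com Y → Mem → Mem → Prop
  | skip (σ : Mem) : BigStep ψ .skip σ σ
  | assign (i : ℕ) (a : Aexp) (σ : Mem) :
      BigStep ψ (.assign i a) σ (σ.update i (a.eval σ))
  | store (i : ℕ) (a : Aexp) (σ : Mem) :
      BigStep ψ (.store i a) σ (σ.update (σ i) (a.eval σ))
  | seq {c1 c2 : Com Y} {σ σ'' σ' : Mem} :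
      BigStep ψ c1 σ σ'' → BigStep ψ c2 σ'' σ' → BigStep ψ (.seq c1 c2) σ σ'
  | assert (P : Mem → Prop) (σ : Mem) : BigStep ψ (.assert P) σ σ
  | condTrue {b : Bexp} {c1 c2 : Com Y} {σ σ' : Mem} :
      b.eval σ = true → BigStep ψ c1 σ σ' → BigStep ψ (.cond b c1 c2) σ σ'
  | condFalse {b : Bexp} {c1 c2 : Com Y} {σ σ' : Mem} :
      b.eval σ = false → BigStep ψ c2 σ σ' → BigStep ψ (.cond b c1 c2) σ σ'
  | whileTrue {b : Bexp} {I : Mem → Prop} {c : Com Y} {σ σ'' σ' : Mem} :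
      b.eval σ = true → BigStep ψ c σ σ'' → BigStep ψ (.while b I c) σ'' σ' →
      BigStep ψ (.while b I c) σ σ'
  | whileFalse {b : Bexp} {I : Mem → Prop} {c : Com Y} {σ : Mem} :
      b.eval σ = false → BigStep ψ (.while b I c) σ σ
  | call {y : Y} {σ σ' : Mem} : BigStep ψ (ψ y) σ σ' → BigStep ψ (.call y) σ σ'

/-- Hoare triple `ψ ⊨ {P} c {Q}`. -/
def HoareTriple {Y : Type} (ψ : Y → Com Y) (P : Mem → Prop) (c : Com Y)
    (Q : Mem → Mem → Prop) : Prop :=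
  ∀ σ σ' : Mem, P σ → BigStep ψ c σ σ' → Q σ σ'

/-- A contract: a precondition and a postcondition. -/
abbrev Contract : Type := (Mem → Prop) × (Mem → Mem → Prop)

/-- Contract validity `ψ ⊨ φ`. -/
def ContractValid {Y : Type} (ψ : Y → Com Y) (φ : Y → Contract) : Prop :=
  ∀ y : Y, HoareTriple ψ (φ y).1 (.call y) (φ y).2

/-- Pointwise big-step execution of a sequence of commands. -/
inductive BigSteps {Y : Type} (ψ : Y → Com Y) : List (Com Y) → List Mem → List Mem → Prop
  | nil : BigSteps ψ [] [] []
  | cons {c : Com Y} {cs : List (Com Y)} {σ σ' : Mem} {σs σs' : List Mem} :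
      BigStep ψ c σ σ' → BigSteps ψ cs σs σs' →
      BigSteps ψ (c :: cs) (σ :: σs) (σ' :: σs')

/-- Relational Hoare triple `ψ ⊨ {P} (c_k) {Q}`. -/
def RHoare {Y : Type} (ψ : Y → Com Y) (P : List Mem → Prop) (cs : List (Com Y))
    (Q : List Mem → List Mem → Prop) : Prop :=
  ∀ σs σs' : List Mem, P σs → BigSteps ψ cs σs σs' → Q σs σs'

/-- A relational contract: a relational precondition and postcondition. -/
abbrev RContract : Type := (List Mem → Prop) × (List Mem → List Mem → Prop)

/-- Relational contract validity `ψ ⊨ Φ`. -/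
def RContractValid {Y : Type} (ψ : Y → Com Y) (Φ : List Y → RContract) : Prop :=
  ∀ ys : List Y, ys ≠ [] → RHoare ψ (Φ ys).1 (ys.map Com.call) (Φ ys).2

/-- Optimized main VC function `Tc`. -/
def Tc {Y : Type} : Com Y → Mem → Mem → (Y → Contract) → (Prop → Prop) → Prop
  | .skip, σ, σ', _, f => f (σ = σ')
  | .assign i a, σ, σ', _, f => f (σ' = σ.update i (a.eval σ))
  | .store i a, σ, σ', _, f => f (σ' = σ.update (σ i) (a.eval σ))
  | .assert P', σ, σ', _, f => f (P' σ ∧ σ = σ')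
  | .seq c0 c1, σ, σ', φ, f =>
      ∀ σ'' : Mem, Tc c0 σ σ'' φ (fun p1 => Tc c1 σ'' σ' φ (fun p2 => f (p1 ∧ p2)))
  | .cond b c0 c1, σ, σ', φ, f =>
      Tc c0 σ σ' φ (fun p1 => Tc c1 σ σ' φ (fun p2 =>
        f ((b.eval σ = true → p1) ∧ (b.eval σ = false → p2))))
  | .call y, σ, σ', φ, f => f ((φ y).1 σ ∧ (φ y).2 σ σ')
  | .while b I _, σ, σ', _, f => f (I σ ∧ I σ' ∧ b.eval σ' = false)

/-- Optimized auxiliary VC function `Ta`. -/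
def Ta {Y : Type} : Com Y → Mem → (Y → Contract) → Prop
  | .skip, _, _ => True
  | .assign _ _, _, _ => True
  | .store _ _, _, _ => True
  | .assert P', σ, _ => P' σ
  | .seq c0 c1, σ, φ =>
      Ta c0 σ φ ∧ ∀ σ' : Mem, Tc c0 σ σ' φ (fun p => p → Ta c1 σ' φ)
  | .cond b c0 c1, σ, φ =>
      (b.eval σ = true → Ta c0 σ φ) ∧ (b.eval σ = false → Ta c1 σ φ)
  | .call y, σ, φ => (φ y).1 σ
  | .while b I c, σ, φ =>
      I σ ∧ (∀ σ' : Mem, I σ' → b.eval σ' = true → Ta c σ' φ) ∧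
      (∀ σ' σ'' : Mem, I σ' → Tc c σ' σ'' φ (fun p => p → I σ''))

/-- Optimized procedure VC `Tf`. -/
def Tf {Y : Type} (φ : Y → Contract) (ψ : Y → Com Y) : Prop :=
  ∀ (y : Y) (σ σ' : Mem), (φ y).1 σ →
    Ta (ψ y) σ φ ∧ Tc (ψ y) σ σ' φ (fun p => p → (φ y).2 σ σ')

/-- Naive main VC function `Tcⁿ`. -/
def Tcn {Y : Type} : Com Y → Mem → (Y → Contract) → (Mem → Prop) → Prop
  | .skip, σ, _, P => P σ
  | .assign i a, σ, _, P => P (σ.update i (a.eval σ))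
  | .store i a, σ, _, P => P (σ.update (σ i) (a.eval σ))
  | .assert P', σ, _, P => P' σ → P σ
  | .seq c0 c1, σ, φ, P => Tcn c0 σ φ (fun σ'' => Tcn c1 σ'' φ P)
  | .cond b c0 c1, σ, φ, P =>
      (b.eval σ = true → Tcn c0 σ φ P) ∧ (b.eval σ = false → Tcn c1 σ φ P)
  | .call y, σ, φ, P => ∀ σ' : Mem, (φ y).1 σ ∧ (φ y).2 σ σ' → P σ'
  | .while b I _, σ, _, P => ∀ σ' : Mem, I σ ∧ I σ' ∧ b.eval σ' = false → P σ'

/-- Naive auxiliary VC function `Taⁿ`. -/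
def Tan {Y : Type} : Com Y → Mem → (Y → Contract) → Prop
  | .skip, _, _ => True
  | .assign _ _, _, _ => True
  | .store _ _, _, _ => True
  | .assert P', σ, _ => P' σ
  | .seq c0 c1, σ, φ => Tan c0 σ φ ∧ Tcn c0 σ φ (fun σ' => Tan c1 σ' φ)
  | .cond b c0 c1, σ, φ =>
      (b.eval σ = true → Tan c0 σ φ) ∧ (b.eval σ = false → Tan c1 σ φ)
  | .call y, σ, φ => (φ y).1 σ
  | .while b I c, σ, φ =>
      I σ ∧ (∀ σ' : Mem, I σ' → b.eval σ' = true → Tan c σ' φ ∧ Tcn c σ' φ I)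

/-- Naive procedure VC `Tfⁿ`. -/
def Tfn {Y : Type} (φ : Y → Contract) (ψ : Y → Com Y) : Prop :=
  ∀ (y : Y) (σ : Mem), (φ y).1 σ →
    Tan (ψ y) σ φ ∧ Tcn (ψ y) σ φ (fun σ' => (φ y).2 σ σ')

/-- Relational VC function `Tr` (recursion over the sequence of commands). -/
def Tr {Y : Type} : List (Com Y) → List Mem → List Mem → (Y → Contract) →
    (Prop → Prop) → Prop
  | [], [], [], _, f => f True
  | c :: cs, σ :: σs, σ' :: σs', φ, f =>
      Tc c σ σ' φ (fun pn => Tr cs σs σs' φ (fun pm => f (pn ∧ pm)))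
  | _, _, _, _, _ => True

/-- Relational auxiliary VC function `Ta_r`. -/
def Tar {Y : Type} : List (Com Y) → List Mem → (Y → Contract) → Prop
  | [], [], _ => True
  | c :: cs, σ :: σs, φ => Ta c σ φ ∧ Tar cs σs φ
  | _, _, _ => True

/-- `Proccall(y, σ, σ', ψ)`. -/
def Proccall {Y : Type} (y : Y) (σ σ' : Mem) (ψ : Y → Com Y) : Prop :=
  BigStep ψ (.call y) σ σ'

/-- `Procpred`: all the calls of the sequence have taken place. -/
def Procpred {Y : Type} (ψ : Y → Com Y) : List Y → List Mem → List Mem → Prop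
  | [], [], [] => True
  | y :: ys, σ :: σs, σ' :: σs' => Proccall y σ σ' ψ ∧ Procpred ψ ys σs σs'
  | _, _, _ => False

/-- `Tpr`: translation of the relational contracts into a logical formula. -/
def Tpr {Y : Type} (Φ : List Y → RContract) (ψ : Y → Com Y) : Prop :=
  ∀ (ys : List Y) (σs σs' : List Mem), ys ≠ [] →
    Procpred ψ ys σs σs' → (Φ ys).1 σs → (Φ ys).2 σs σs'

/-- `Φcall`: reduce singleton relational contracts to standard contracts with
tracked calls. -/
def Phicall {Y : Type} (Φ : List Y → RContract) (ψ : Y → Com Y) : Y → Contract :=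
  fun y =>
    (fun σ => (Φ [y]).1 [σ],
     fun σ σ' => (Φ [y]).2 [σ] [σ'] ∧ Proccall y σ σ' ψ)

/-- Relational procedure VC `Tf_r`. -/
def Tfr {Y : Type} (Φ : List Y → RContract) (ψ : Y → Com Y) : Prop :=
  ∀ (ys : List Y) (σs σs' : List Mem) (ψ' : Y → Com Y),
    (Φ ys).1 σs → Tpr Φ ψ' →
    Tar (ys.map ψ) σs (Phicall Φ ψ') ∧
    Tr (ys.map ψ) σs σs' (Phicall Φ ψ')
      (fun p => p → (Φ ys).2 σs σs')

/-- The recursive summation command `c_sum`. -/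
def csum : Com Unit :=
  .cond (.cmp .lt (.loc 1) (.loc 2))
    (.seq (.assign 3 (.binop .add (.loc 3) (.loc 1)))
      (.seq (.assign 1 (.binop .add (.loc 1) (.const 1)))
        (.call ())))
    .skip

/-- The procedure environment binding `y_sum` to `c_sum`. -/
def psum : Unit → Com Unit := fun _ => csum

/-- Replace every call by a command. -/
def Com.inl {Y : Type} (g : Y → Com Y) : Com Y → Com Y
  | .skip => .skip
  | .assign i a => .assign i a
  | .store i a => .store i a
  | .seq c1 c2 => .seq (c1.inl g) (c2.inl g)
  | .assert P => .assert P
  | .cond b c1 c2 => .cond b (c1.inl g) (c2.inl g)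
  | .while b I c => .while b I (c.inl g)
  | .call y => g y

theorem Com.inl_call {Y : Type} (c : Com Y) : c.inl Com.call = c := by
  induction c <;> simp_all [Com.inl]

theorem while_sim {Y : Type} {ψ1 ψ2 : Y → Com Y} {b : Bexp} {I : Mem → Prop} {c1 c2 : Com Y}
    (hc : ∀ σ σ', BigStep ψ1 c1 σ σ' → BigStep ψ2 c2 σ σ') {σ σ' : Mem}
    (h : BigStep ψ1 (.while b I c1) σ σ') : BigStep ψ2 (.while b I c2) σ σ' := by
  generalize hw : Com.while b I c1 = w at h
  induction h with
  | whileTrue hb h1 _ _ ih =>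
    cases hw
    exact .whileTrue hb (hc _ _ h1) (ih rfl)
  | whileFalse hb =>
    cases hw
    exact .whileFalse hb
  | _ => cases hw

theorem inl_sim {Y : Type} {ψ1 ψ2 g1 g2 : Y → Com Y}
    (hg : ∀ z σ σ', BigStep ψ1 (g1 z) σ σ' → BigStep ψ2 (g2 z) σ σ') (c : Com Y) :
    ∀ σ σ', BigStep ψ1 (c.inl g1) σ σ' → BigStep ψ2 (c.inl g2) σ σ' := by
  induction c with
  | skip => intro σ σ' h; cases h; exact .skip _
  | assign i a => intro σ σ' h; cases h; exact .assign _ _ _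
  | store i a => intro σ σ' h; cases h; exact .store _ _ _
  | assert P => intro σ σ' h; cases h; exact .assert _ _
  | seq c1 c2 ih1 ih2 =>
    intro σ σ' h
    cases h with
    | seq h1 h2 => exact .seq (ih1 _ _ h1) (ih2 _ _ h2)
  | cond b c1 c2 ih1 ih2 =>
    intro σ σ' h
    cases h with
    | condTrue hb h1 => exact .condTrue hb (ih1 _ _ h1)
    | condFalse hb h1 => exact .condFalse hb (ih2 _ _ h1)
  | call y => exact hg y
  | _ b I c ih => intro σ σ' h; exact while_sim ih h

/-- Finite unfoldings of the procedure environment. -/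
def unfoldEnv {Y : Type} (ψ : Y → Com Y) : ℕ → Y → Com Y
  | 0 => fun _ => .while .tt (fun _ => True) .skip
  | k + 1 => fun y => (ψ y).inl (unfoldEnv ψ k)

theorem diverge {Y : Type} {ψ : Y → Com Y} {I : Mem → Prop} {c : Com Y} {σ σ' : Mem}
    (h : BigStep ψ (.while .tt I c) σ σ') : False := by
  generalize hw : Com.while .tt I c = w at h
  induction h with
  | whileTrue hb h1 _ _ ih =>
    cases hw
    exact ih rfl
  | whileFalse hb =>
    cases hw
    simp [Bexp.eval] at hb
  | _ => cases hw

theorem unfold_mono {Y : Type} (ψ : Y → Com Y) {ψ1 ψ2 : Y → Com Y} (k : ℕ) :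
    ∀ m, k ≤ m → ∀ z σ σ', BigStep ψ1 (unfoldEnv ψ k z) σ σ' →
      BigStep ψ2 (unfoldEnv ψ m z) σ σ' := by
  induction k with
  | zero => intro m _ z σ σ' h; exact (diverge h).elim
  | succ k ih =>
    intro m hm z
    obtain ⟨m, rfl⟩ : ∃ n, m = n + 1 := ⟨m - 1, by omega⟩
    exact inl_sim (ih m (by omega)) (ψ z)

theorem env_mono {Y : Type} (ψ : Y → Com Y) {k m : ℕ} (hkm : k ≤ m) {c : Com Y} {σ σ' : Mem}
    (h : BigStep (unfoldEnv ψ k) c σ σ') : BigStep (unfoldEnv ψ m) c σ σ' := by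
  have := inl_sim (ψ1 := unfoldEnv ψ k) (ψ2 := unfoldEnv ψ m) (g1 := Com.call) (g2 := Com.call)
    (fun z σ σ' h => by
      cases h with
      | call h => exact .call (unfold_mono ψ k m hkm z _ _ h)) c σ σ'
  rw [Com.inl_call] at this
  exact this h

theorem exists_unfold {Y : Type} (ψ : Y → Com Y) {c : Com Y} {σ σ' : Mem}
    (h : BigStep ψ c σ σ') : ∃ k, BigStep (unfoldEnv ψ k) c σ σ' := by
  induction h with
  | skip => exact ⟨0, .skip _⟩
  | assign => exact ⟨0, .assign _ _ _⟩
  | store => exact ⟨0, .store _ _ _⟩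
  | assert => exact ⟨0, .assert _ _⟩
  | seq _ _ ih1 ih2 =>
    obtain ⟨k, h1⟩ := ih1
    obtain ⟨m, h2⟩ := ih2
    exact ⟨max k m, .seq (env_mono ψ (le_max_left _ _) h1) (env_mono ψ (le_max_right _ _) h2)⟩
  | condTrue hb _ ih => obtain ⟨k, h1⟩ := ih; exact ⟨k, .condTrue hb h1⟩
  | condFalse hb _ ih => obtain ⟨k, h1⟩ := ih; exact ⟨k, .condFalse hb h1⟩
  | whileTrue hb _ _ ih1 ih2 =>
    obtain ⟨k, h1⟩ := ih1
    obtain ⟨m, h2⟩ := ih2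
    exact ⟨max k m, .whileTrue hb (env_mono ψ (le_max_left _ _) h1)
      (env_mono ψ (le_max_right _ _) h2)⟩
  | whileFalse hb => exact ⟨0, .whileFalse hb⟩
  | @call y σ σ' _ ih =>
    obtain ⟨k, h1⟩ := ih
    refine ⟨k + 1, .call ?_⟩
    rw [← Com.inl_call (ψ y)] at h1
    refine inl_sim (fun z σ σ' h => ?_) (ψ y) _ _ h1
    cases h with
    | call h => exact unfold_mono ψ k k le_rfl z _ _ h

theorem unfold_valid {Y : Type} (ψ : Y → Com Y) (φ : Y → Contract)
    (h : ∀ ψ' : Y → Com Y, ContractValid ψ' φ →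
      ∀ y : Y, HoareTriple ψ' (φ y).1 (ψ y) (φ y).2) (k : ℕ) :
    ContractValid (unfoldEnv ψ k) φ := by
  induction k with
  | zero =>
    intro y σ σ' _ hs
    cases hs with
    | call hs => exact (diverge hs).elim
  | succ k ih =>
    intro y σ σ' hp hs
    cases hs with
    | call hs =>
      refine h _ ih y σ σ' hp ?_
      rw [← Com.inl_call (ψ y)]
      exact inl_sim (fun z σ σ' h => .call (unfold_mono ψ k k le_rfl z _ _ h)) (ψ y) _ _ hs

/-- Mutual recursion for procedure contracts (`recursive_proc`). -/
theorem recursive_proc {Y : Type} (ψ : Y → Com Y) (φ : Y → Contract)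
    (h : ∀ ψ' : Y → Com Y, ContractValid ψ' φ →
      ∀ y : Y, HoareTriple ψ' (φ y).1 (ψ y) (φ y).2) :
    ContractValid ψ φ := by 
  intro y σ σ' hp hs
  obtain ⟨k, hk⟩ := exists_unfold ψ hs
  exact unfold_valid ψ φ h k y σ σ' hp hk
end

section
/- (Lemma 1: optimized main VC implies naive main VC.) For every command c, contract environment φ, memory state σ and predicate P on memory states, if for all memory states σ' we have Tc⟦c⟧(σ, σ', φ, λp. p ⇒ P(σ')), then Tcⁿ⟦c⟧(σ, φ, P). -/
theorem Tc_mono {Y : Type} (φ : Y → Contract) (c : Com Y) :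
    ∀ (σ σ' : Mem) (f g : Prop → Prop), (∀ p, f p → g p) → Tc c σ σ' φ f → Tc c σ σ' φ g := by
  induction c with
  | seq c0 c1 ih0 ih1 =>
    intro σ σ' f g hfg h σ''
    exact ih0 _ _ _ _ (fun p1 => ih1 _ _ _ _ (fun p2 => hfg _)) (h σ'')
  | cond b c0 c1 ih0 ih1 =>
    intro σ σ' f g hfg h
    exact ih0 _ _ _ _ (fun p1 => ih1 _ _ _ _ (fun p2 => hfg _)) h
  | _ => intro σ σ' f g hfg h; exact hfg _ h

theorem Tc_const {Y : Type} (φ : Y → Contract) (c : Com Y) :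
    ∀ (σ σ' : Mem) (Q : Prop), Tc c σ σ' φ (fun _ => Q) → Q := by
  induction c with
  | seq c0 c1 ih0 ih1 =>
    intro σ σ' Q h
    exact ih1 _ _ _ (ih0 _ _ _ (h σ))
  | cond b c0 c1 ih0 ih1 =>
    intro σ σ' Q h
    exact ih1 _ _ _ (ih0 _ _ _ h)
  | _ => intro σ σ' Q h; exact h

theorem Tc_forall {Y X : Type} (φ : Y → Contract) (c : Com Y) :
    ∀ (σ σ' : Mem) (f : X → Prop → Prop), (∀ x, Tc c σ σ' φ (f x)) →
      Tc c σ σ' φ (fun p => ∀ x, f x p) := by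
  induction c with
  | seq c0 c1 ih0 ih1 =>
    intro σ σ' f h σ''
    exact Tc_mono φ c0 _ _ _ _ (fun p1 hp => ih1 _ _ (fun x p2 => f x (p1 ∧ p2)) hp)
      (ih0 _ _ _ (fun x => h x σ''))
  | cond b c0 c1 ih0 ih1 =>
    intro σ σ' f h
    exact Tc_mono φ c0 _ _ _ _ (fun p1 hp => ih1 _ _
      (fun x p2 => f x ((b.eval σ = true → p1) ∧ (b.eval σ = false → p2))) hp)
      (ih0 _ _ _ h)
  | _ => intro σ σ' f h; exact h

/-- Lemma 1: the optimized main VC implies the naive main VC. -/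
theorem tc_opt_implies_naive {Y : Type} (c : Com Y) (φ : Y → Contract)
    (σ : Mem) (P : Mem → Prop)
    (h : ∀ σ' : Mem, Tc c σ σ' φ (fun p => p → P σ')) :
    Tcn c σ φ P := by 
  induction c generalizing σ P with
  | skip => exact h σ rfl
  | assign i a => exact h _ rfl
  | store i a => exact h _ rfl
  | assert P' => exact fun hp => h σ ⟨hp, rfl⟩
  | call y => exact h
  | seq c0 c1 ih0 ih1 =>
    refine ih0 _ _ (fun σ'' => ?_)
    refine Tc_mono φ c0 _ _ _ _ ?_ (Tc_forall φ c0 σ σ'' _ (fun σ' => h σ' σ''))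
    intro p1 hp hp1
    exact ih1 _ _ (fun σ' => Tc_mono φ c1 _ _ _ _ (fun p2 k hp2 => k ⟨hp1, hp2⟩) (hp σ'))
  | cond b c0 c1 ih0 ih1 =>
    constructor
    · intro hb
      refine ih0 _ _ (fun σ' => Tc_mono φ c0 _ _ _ _ ?_ (h σ'))
      intro p1 hp hp1
      exact Tc_const φ c1 _ _ _ (Tc_mono φ c1 _ _ _ _
        (fun p2 k => k ⟨fun _ => hp1, fun hf => by simp [hb] at hf⟩) hp)
    · intro hb
      refine ih1 _ _ (fun σ' => Tc_const φ c0 σ σ' _ (Tc_mono φ c0 _ _ _ _ ?_ (h σ')))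
      intro p1 hp
      exact Tc_mono φ c1 _ _ _ _
        (fun p2 k hp2 => k ⟨fun hf => by simp [hb] at hf, fun _ => hp2⟩) hp
  | _ => exact h
end

section
/- (Lemma 2: optimized auxiliary VC implies naive auxiliary VC.) For every command c, contract environment φ and memory state σ, if Ta⟦c⟧(σ, φ) holds, then Taⁿ⟦c⟧(σ, φ) holds. -/
/-- Relational meaning of the formula that `Tc` accumulates. -/
def RelC {Y : Type} : Com Y → Mem → Mem → (Y → Contract) → Prop
  | .skip, σ, σ', _ => σ = σ'
  | .assign i a, σ, σ', _ => σ' = σ.update i (a.eval σ)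
  | .store i a, σ, σ', _ => σ' = σ.update (σ i) (a.eval σ)
  | .assert P', σ, σ', _ => P' σ ∧ σ = σ'
  | .seq c0 c1, σ, σ', φ => ∃ σ'' : Mem, RelC c0 σ σ'' φ ∧ RelC c1 σ'' σ' φ
  | .cond b c0 c1, σ, σ', φ =>
      (b.eval σ = true ∧ RelC c0 σ σ' φ) ∨ (b.eval σ = false ∧ RelC c1 σ σ' φ)
  | .call y, σ, σ', φ => (φ y).1 σ ∧ (φ y).2 σ σ'
  | .while b I _, σ, σ', _ => I σ ∧ I σ' ∧ b.eval σ' = false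

theorem Tc_exists {Y : Type} (φ : Y → Contract) (c : Com Y) :
    ∀ (σ σ' : Mem) (f : Prop → Prop), Tc c σ σ' φ f → ∃ p, f p := by
  induction c with
  | seq c0 c1 ih0 ih1 =>
    intro σ σ' f h
    obtain ⟨p1, h1⟩ := ih0 _ _ _ (h σ)
    obtain ⟨p2, h2⟩ := ih1 _ _ _ h1
    exact ⟨_, h2⟩
  | cond b c0 c1 ih0 ih1 =>
    intro σ σ' f h
    obtain ⟨p1, h1⟩ := ih0 _ _ _ h
    obtain ⟨p2, h2⟩ := ih1 _ _ _ h1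
    exact ⟨_, h2⟩
  | _ => exact fun σ σ' f h => ⟨_, h⟩

theorem Tc_true {Y : Type} (φ : Y → Contract) (c : Com Y) :
    ∀ (σ σ' : Mem) (f : Prop → Prop), RelC c σ σ' φ → Tc c σ σ' φ f → f True := by
  induction c with
  | seq c0 c1 ih0 ih1 =>
    rintro σ σ' f ⟨σ'', r0, r1⟩ h
    have := ih1 _ _ _ r1 (ih0 _ _ _ r0 (h σ''))
    simpa using this
  | cond b c0 c1 ih0 ih1 =>
    rintro σ σ' f (⟨hb, r⟩ | ⟨hb, r⟩) h
    · obtain ⟨p2, h2⟩ := Tc_exists φ c1 _ _ _ (ih0 _ _ _ r h)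
      simpa [hb] using h2
    · obtain ⟨p1, h1⟩ := Tc_exists φ c0 _ _ _ h
      simpa [hb] using ih1 _ _ _ r h1
  | _ => exact fun σ σ' f r h => (eq_true r) ▸ h

theorem Tcn_of_RelC {Y : Type} (φ : Y → Contract) (c : Com Y) :
    ∀ (σ : Mem) (P : Mem → Prop), (∀ σ', RelC c σ σ' φ → P σ') → Tcn c σ φ P := by
  induction c with
  | seq c0 c1 ih0 ih1 =>
    exact fun σ P h => ih0 _ _ fun σ'' r0 => ih1 _ _ fun σ' r1 => h _ ⟨σ'', r0, r1⟩
  | cond b c0 c1 ih0 ih1 =>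
    exact fun σ P h => ⟨fun hb => ih0 _ _ fun σ' r => h _ (Or.inl ⟨hb, r⟩),
      fun hb => ih1 _ _ fun σ' r => h _ (Or.inr ⟨hb, r⟩)⟩
  | assert P' => exact fun σ P h hp => h _ ⟨hp, rfl⟩
  | _ => first | exact fun σ P h => h _ rfl | exact fun σ P h => h

/-- The optimized main VC implies the naive main VC. -/
theorem Tcn_of_Tc {Y : Type} (φ : Y → Contract) (c : Com Y) (σ : Mem) (P : Mem → Prop)
    (h : ∀ σ', Tc c σ σ' φ (fun p => p → P σ')) : Tcn c σ φ P :=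
  Tcn_of_RelC φ c σ P fun σ' r => Tc_true φ c σ σ' _ r (h σ') trivial

/-- Lemma 2: the optimized auxiliary VC implies the naive auxiliary VC. -/
theorem ta_opt_implies_naive {Y : Type} (c : Com Y) (φ : Y → Contract)
    (σ : Mem) (h : Ta c σ φ) : Tan c σ φ := by
  induction c generalizing σ with
  | seq c0 c1 ih0 ih1 =>
    refine ⟨ih0 _ h.1, Tcn_of_RelC φ c0 σ _ fun σ' r => ih1 _ ?_⟩
    exact Tc_true φ c0 σ σ' _ r (h.2 σ') trivial
  | cond b c0 c1 ih0 ih1 =>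
    exact ⟨fun hb => ih0 _ (h.1 hb), fun hb => ih1 _ (h.2 hb)⟩
  | _ =>
    first
    | exact h
    | rename_i b I c ih
      exact ⟨h.1, fun σ' hI hb => ⟨ih _ (h.2.1 σ' hI hb),
        Tcn_of_Tc φ c σ' I fun σ'' => h.2.2 σ' σ'' hI⟩⟩
end

section
/- (Soundness of the naive VCGen, proved in the Coq development.) Let ψ be a procedure environment, φ a contract environment, c a command, P a precondition and Q a postcondition. Assume: (i) Tfⁿ(φ, ψ); (ii) for all memory states σ, P(σ) implies Taⁿ⟦c⟧(σ, φ); and (iii) for all memory states σ, P(σ) implies Tcⁿ⟦c⟧(σ, φ, λσ'. Q(σ, σ')). Then the Hoare triple ψ ⊨ {P} c {Q} holds. -/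
/-- Soundness for a single execution, by induction on the big-step derivation. -/
theorem naive_sound_step {Y : Type} (ψ : Y → Com Y) (φ : Y → Contract) (h1 : Tfn φ ψ)
    {c : Com Y} {σ σ' : Mem} (h : BigStep ψ c σ σ') :
    ∀ P : Mem → Prop, Tan c σ φ → Tcn c σ φ P → P σ' := by
  induction h with
  | skip σ => intro P _ hc; exact hc
  | assign i a σ => intro P _ hc; exact hc
  | store i a σ => intro P _ hc; exact hc
  | seq _ _ ih1 ih2 =>
    intro P ha hc
    simp only [Tan, Tcn] at ha hc
    exact ih2 P (ih1 _ ha.1 ha.2) (ih1 _ ha.1 hc)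
  | assert P' σ =>
    intro P ha hc
    simp only [Tan, Tcn] at ha hc
    exact hc ha
  | condTrue hb _ ih =>
    intro P ha hc
    simp only [Tan, Tcn] at ha hc
    exact ih P (ha.1 hb) (hc.1 hb)
  | condFalse hb _ ih =>
    intro P ha hc
    simp only [Tan, Tcn] at ha hc
    exact ih P (ha.2 hb) (hc.2 hb)
  | whileTrue hb _ _ ih1 ih2 =>
    intro P ha hc
    simp only [Tan, Tcn] at ha hc ih2
    have hbody := ha.2 _ ha.1 hb
    have hI := ih1 _ hbody.1 hbody.2
    exact ih2 P ⟨hI, ha.2⟩ (fun τ hτ => hc τ ⟨ha.1, hτ.2⟩)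
  | whileFalse hb =>
    intro P ha hc
    simp only [Tan, Tcn] at ha hc
    exact hc _ ⟨ha.1, ha.1, hb⟩
  | call _ ih =>
    intro P ha hc
    simp only [Tan, Tcn] at ha hc
    have hy := h1 _ _ ha
    exact hc _ ⟨ha, ih _ hy.1 hy.2⟩

/-- Soundness of the naive VCGen. -/
theorem naive_vcgen_sound {Y : Type} (ψ : Y → Com Y) (φ : Y → Contract)
    (c : Com Y) (P : Mem → Prop) (Q : Mem → Mem → Prop)
    (h1 : Tfn φ ψ)
    (h2 : ∀ σ : Mem, P σ → Tan c σ φ)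
    (h3 : ∀ σ : Mem, P σ → Tcn c σ φ (fun σ' => Q σ σ')) :
    HoareTriple ψ P c Q := by
  intro σ σ' hP hs
  exact naive_sound_step ψ φ h1 hs (fun τ => Q σ τ) (h2 σ hP) (h3 σ hP)
end

section
/- (Relational property R3 of the summation procedure.) The relational Hoare triple ψ_sum ⊨ {P} (c_sum, c_sum) {Q} holds, where P(σ₁, σ₂) := σ₂(1) < σ₂(2) ∧ σ₁(2) = σ₂(2) ∧ σ₁(1) = σ₂(1) + 1 ∧ σ₁(3) = σ₂(3) + σ₂(1), and Q(σ₁, σ₂, σ'₁, σ'₂) := σ'₁(3) = σ'₂(3). That is, if ⟨c_sum, σ₁⟩ →_{ψ_sum} σ'₁ and ⟨c_sum, σ₂⟩ →_{ψ_sum} σ'₂ and P(σ₁, σ₂) holds, then σ'₁(3) = σ'₂(3). -/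
/-- One-step inversion of an execution of `csum`. -/
theorem csum_inv {σ σ' : Mem} (h : BigStep psum csum σ σ') :
    (σ 1 < σ 2 ∧ ∃ τ : Mem, τ 1 = σ 1 + 1 ∧ τ 2 = σ 2 ∧ τ 3 = σ 3 + σ 1 ∧
      BigStep psum csum τ σ') ∨ (σ 2 ≤ σ 1 ∧ σ' = σ) := by
  unfold csum at h
  cases h with
  | condTrue hb h =>
    left
    refine ⟨of_decide_eq_true hb, ?_⟩
    cases h with
    | seq ha h =>
      cases ha
      cases h with
      | seq ha h =>
        cases ha
        cases h with
        | call h =>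
          refine ⟨_, ?_, ?_, ?_, h⟩ <;> simp [Mem.update, Aexp.eval, Aop.eval]
  | condFalse hb h =>
    right
    refine ⟨Nat.le_of_not_lt (of_decide_eq_false hb), ?_⟩
    cases h
    rfl

/-- The final value of `x_3` depends only on the initial values of `x_1, x_2, x_3`. -/
theorem csum_det (n : ℕ) : ∀ {σ τ σ' τ' : Mem}, σ 2 - σ 1 = n →
    σ 1 = τ 1 → σ 2 = τ 2 → σ 3 = τ 3 →
    BigStep psum csum σ σ' → BigStep psum csum τ τ' → σ' 3 = τ' 3 := by
  induction n with
  | zero =>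
    intro σ τ σ' τ' hn e1 e2 e3 h h'
    rcases csum_inv h with ⟨hl, _⟩ | ⟨_, rfl⟩
    · omega
    rcases csum_inv h' with ⟨hl, _⟩ | ⟨_, rfl⟩
    · omega
    exact e3
  | succ n ih =>
    intro σ τ σ' τ' hn e1 e2 e3 h h'
    rcases csum_inv h with ⟨_, a, a1, a2, a3, ha⟩ | ⟨_, _⟩
    · rcases csum_inv h' with ⟨_, b, b1, b2, b3, hb⟩ | ⟨_, _⟩
      · exact ih (by omega) (by omega) (by omega) (by omega) ha hb
      · omega
    · omega

/-- Relational property R3 of the summation procedure. -/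
theorem csum_R3 (σ1 σ2 σ1' σ2' : Mem)
    (h1 : BigStep psum csum σ1 σ1')
    (h2 : BigStep psum csum σ2 σ2')
    (hP : σ2 1 < σ2 2 ∧ σ1 2 = σ2 2 ∧ σ1 1 = σ2 1 + 1 ∧
          σ1 3 = σ2 3 + σ2 1) :
    σ1' 3 = σ2' 3 := by
  obtain ⟨hlt, e2, e1, e3⟩ := hP
  rcases csum_inv h2 with ⟨_, b, b1, b2, b3, hb⟩ | ⟨_, _⟩
  · exact csum_det _ rfl (by omega) (by omega) (by omega) h1 hb
  · omega
end
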